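/- Let t ≥ 1 be an integer and let G be a finite K_{2,t}-free graph, i.e., every two distinct vertices of G have at most t − 1 common neighbors. Let D and k be nonnegative integers such that at most k vertices of G have degree less than D, and let C be a finite set of vertices with t·|C| < D − k. Then for every vertex u ∉ C with deg(u) ≥ D, there exists a neighbor w of u such that deg(w) ≥ D, w ∉ C, and w is not adjacent to any vertex of C. -/

import Mathlib

/-- In a `K_{2,t}`-free graph (every two distinct vertices have at most
`t - 1` common neighbors), if at most `k` vertices have degree less than `D` and `C` is a
set of vertices with `t·|C| < D - k`, then every vertex `u ∉ C` of degree at least `D` has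
a neighbor `w` of degree at least `D` with `w ∉ C` that is not adjacent to any vertex of `C`. -/
theorem robber_escape_K2t_free {V : Type*} [Fintype V] [DecidableEq V]
    (G : SimpleGraph V) [DecidableRel G.Adj] (t : ℕ) (ht : 1 ≤ t)
    (hK2t : ∀ u v : V, u ≠ v → (G.neighborFinset u ∩ G.neighborFinset v).card ≤ t - 1)
    (D k : ℕ)
    (hk : (Finset.univ.filter fun v : V => G.degree v < D).card ≤ k)
    (C : Finset V) (hC : (t : ℤ) * C.card < (D : ℤ) - k) :
    ∀ u : V, u ∉ C → D ≤ G.degree u →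
      ∃ w : V, G.Adj u w ∧ D ≤ G.degree w ∧ w ∉ C ∧ ∀ c ∈ C, ¬ G.Adj w c := by
  intro u hu hD
  by_contra! hcon
  have hsub : G.neighborFinset u ⊆ (Finset.univ.filter fun v : V => G.degree v < D) ∪
      C.biUnion (fun c => insert c (G.neighborFinset u ∩ G.neighborFinset c)) := by
    intro w hw
    have hw' : G.Adj u w := by simpa using hw
    by_cases h1 : G.degree w < D
    · exact Finset.mem_union_left _ (by simp [h1])
    · apply Finset.mem_union_right
      rw [Finset.mem_biUnion]
      by_cases h2 : w ∈ C
      · exact ⟨w, h2, Finset.mem_insert_self _ _⟩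
      · obtain ⟨c, hc, hwc⟩ := hcon w hw' (not_lt.mp h1) h2
        exact ⟨c, hc, by simp [hw', hwc.symm]⟩
  have hb : (C.biUnion (fun c => insert c (G.neighborFinset u ∩ G.neighborFinset c))).card
      ≤ C.card * t := by
    apply Finset.card_biUnion_le_card_mul
    intro c hc
    have hne : u ≠ c := fun h => hu (h ▸ hc)
    have h1 := hK2t u c hne
    have h2 := Finset.card_insert_le c (G.neighborFinset u ∩ G.neighborFinset c)
    omega
  have h3 := (Finset.card_le_card hsub).trans (Finset.card_union_le _ _)
  rw [G.card_neighborFinset_eq_degree] at h3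
  have h4 : D ≤ k + C.card * t := by omega
  have h5 : (D : ℤ) ≤ k + C.card * t := by exact_mod_cast h4
  linarith [mul_comm (t : ℤ) C.card]
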